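/- Let n ≥ m ≥ 1 with nm ≥ 2, and let B_1,…,B_r ∈ ℝ^{n×m} satisfy Σ_{k=1}^r B_k^⊤B_k = I_m and Σ_{k=1}^r B_kB_k^⊤ ⪯ I_n. Let z_1,…,z_r be independent standard Gaussian real random variables, set G = Σ_{k=1}^r z_k B_k and W = Σ_{k=1}^r vec(B_k)vec(B_k)^⊤. For T ≥ 0 define β_{n,m}(T) := inf_{λ∈[0,1]} ∫₀^T (1 + 2tm(1−λ)/(nm−1))^{−(nm−1)/2}(1 + 2tmλ)^{−3/2} dt. Then for every T ≥ 0 and every δ ∈ (0,1), and for every v ∈ ℝ^{nm}: E[(v^⊤vec(G))²/σmax(G)²] ≥ ( β_{n,m}(T) + (1 − √δ)·e^{−2T·log(6m/δ)}/(2·log(6m/δ)) ) · v^⊤Wv. -/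

import Mathlib

open MeasureTheory ProbabilityTheory Matrix

/-- The largest singular value (spectral norm) of a real matrix. -/
noncomputable def sigmaMax {n m : ℕ} (G : Matrix (Fin n) (Fin m) ℝ) : ℝ :=
  ‖LinearMap.toContinuousLinearMap (Matrix.toEuclideanLin G)‖

/-- `vec(U)`: stacking the columns of `U`, indexed by (column, row) pairs. -/
def vecM {n m : ℕ} (U : Matrix (Fin n) (Fin m) ℝ) : Fin m × Fin n → ℝ :=
  fun p => U p.2 p.1

/-- `β_{n,m}(T) = inf_{λ∈[0,1]} ∫₀^T (1 + 2tm(1−λ)/(nm−1))^{−(nm−1)/2} (1 + 2tmλ)^{−3/2} dt`. -/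
noncomputable def betaNMT (n m : ℕ) (T : ℝ) : ℝ :=
  ⨅ l : Set.Icc (0 : ℝ) 1,
    ∫ t in (0 : ℝ)..T,
      (1 + 2 * t * m * (1 - (l : ℝ)) / ((n : ℝ) * m - 1)) ^ (-(((n : ℝ) * m - 1) / 2))
        * (1 + 2 * t * m * (l : ℝ)) ^ (-(3 / 2 : ℝ))

theorem integrable_pow_gaussianReal (a : ℕ) :
    Integrable (fun x : ℝ => x ^ a) (gaussianReal 0 1) := by
  have h := (memLp_id_gaussianReal (μ := 0) (v := 1) (a : NNReal))
  have := h.integrable_norm_pow'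
  simp only [id] at this
  refine (integrable_norm_iff (by fun_prop)).1 ?_
  simpa using this

theorem integral_pow_succ_gaussianReal (a : ℕ) :
    ∫ x, x * x ^ a ∂(gaussianReal 0 1) = a * ∫ x, x ^ (a - 1) ∂(gaussianReal 0 1) := by
  have hd : ∀ x : ℝ, HasDerivAt (fun x => gaussianPDFReal 0 1 x * x ^ a)
      (a * (gaussianPDFReal 0 1 x * x ^ (a - 1)) - gaussianPDFReal 0 1 x * (x * x ^ a)) x := by
    intro x
    have h1 : HasDerivAt (gaussianPDFReal 0 1) (gaussianPDFReal 0 1 x * (-x)) x := by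
      rw [gaussianPDFReal_def]
      have h0 : HasDerivAt (fun x : ℝ => -(x - 0) ^ 2 / (2 * ((1 : NNReal) : ℝ))) (-x) x := by
        have := (((hasDerivAt_id x).sub_const (0 : ℝ)).pow 2).neg.div_const (2 * ((1 : NNReal) : ℝ))
        exact this.congr_deriv (by simp; ring)
      exact (h0.exp.const_mul ((√(2 * Real.pi * ((1 : NNReal) : ℝ)))⁻¹)).congr_deriv (by ring)
    exact (h1.mul (hasDerivAt_pow a x)).congr_deriv (by ring)
  have hi : ∀ b : ℕ, Integrable (fun x => gaussianPDFReal 0 1 x * x ^ b) := by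
    intro b
    have h := integrable_pow_gaussianReal b
    rw [gaussianReal_of_var_ne_zero 0 one_ne_zero] at h
    rw [integrable_withDensity_iff_integrable_smul' (measurable_gaussianPDF 0 1)
      (Filter.Eventually.of_forall fun x => ENNReal.ofReal_lt_top)] at h
    simpa [toReal_gaussianPDF] using h
  have hi' : Integrable (fun x : ℝ => gaussianPDFReal 0 1 x * (x * x ^ a)) := by
    simpa [pow_succ'] using hi (a + 1)
  have h0 := integral_eq_zero_of_hasDerivAt_of_integrable hd
    (((hi (a - 1)).const_mul (a : ℝ)).sub hi') (hi a)
  rw [integral_sub ((hi (a - 1)).const_mul (a : ℝ)) hi', integral_const_mul] at h0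
  rw [integral_gaussianReal_eq_integral_smul one_ne_zero,
    integral_gaussianReal_eq_integral_smul one_ne_zero]
  simp only [smul_eq_mul]
  linarith

/-- The standard Gaussian measure on `ℝ^ι`. -/
noncomputable abbrev piGaussian (ι : Type*) [Fintype ι] : Measure (ι → ℝ) :=
  Measure.pi fun _ : ι => gaussianReal 0 1

section poly
variable {κ : Type*} [Fintype κ]

theorem integrable_eval_piGaussian (p : MvPolynomial κ ℝ) :
    Integrable (fun x => MvPolynomial.eval x p) (piGaussian κ) := by
  induction p using MvPolynomial.induction_on' with
  | monomial u a =>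
    simp only [MvPolynomial.eval_monomial, Finsupp.prod_fintype _ _ fun i => pow_zero _]
    exact (Integrable.fintype_prod (fun i => integrable_pow_gaussianReal (u i))).const_mul a
  | add p q hp hq => simpa using! hp.add hq

theorem integral_eval_X_mul_piGaussian [DecidableEq κ] (k : κ) (p : MvPolynomial κ ℝ) :
    ∫ x, MvPolynomial.eval x (MvPolynomial.X k * p) ∂(piGaussian κ)
      = ∫ x, MvPolynomial.eval x (MvPolynomial.pderiv k p) ∂(piGaussian κ) := by
  induction p using MvPolynomial.induction_on' with
  | monomial u a =>
    simp only [MvPolynomial.pderiv_monomial, MvPolynomial.eval_monomial, map_mul,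
      MvPolynomial.eval_X, Finsupp.prod_fintype _ _ fun i => pow_zero _]
    have h1 : ∀ x : κ → ℝ, x k * (a * ∏ i, x i ^ u i)
        = a * ∏ i, ((if i = k then x i else 1) * x i ^ u i) := by
      intro x
      rw [Finset.prod_mul_distrib]
      simp
      ring
    simp_rw [h1, integral_const_mul]
    rw [integral_fintype_prod_eq_prod (fun i (y : ℝ) => (if i = k then y else 1) * y ^ u i),
      integral_fintype_prod_eq_prod
        (fun i (y : ℝ) => y ^ ((u - Finsupp.single k 1 : κ →₀ ℕ) i)),
      ← Finset.mul_prod_erase _ _ (Finset.mem_univ k),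
      ← Finset.mul_prod_erase _ _ (Finset.mem_univ k)]
    have h2 : ∀ i ∈ Finset.univ.erase k,
        ∫ y, (if i = k then y else 1) * y ^ u i ∂(gaussianReal 0 1)
          = ∫ y, y ^ ((u - Finsupp.single k 1 : κ →₀ ℕ) i) ∂(gaussianReal 0 1) := by
      intro i hi
      have : i ≠ k := Finset.ne_of_mem_erase hi
      simp [this]
    rw [Finset.prod_congr rfl h2]
    simp [integral_pow_succ_gaussianReal]
    ring
  | add p q hp hq =>
    simp only [mul_add, map_add] at hp hq ⊢
    rw [integral_add (integrable_eval_piGaussian _) (integrable_eval_piGaussian _),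
      integral_add (integrable_eval_piGaussian _) (integrable_eval_piGaussian _), hp, hq]
end poly

theorem Matrix.IsSymm.exists_orthogonal_diagonal {ι : Type*} [Fintype ι] [DecidableEq ι]
    {Y : Matrix ι ι ℝ} (hY : Y.IsSymm) :
    ∃ (U : Matrix ι ι ℝ), U * Uᵀ = 1 ∧ Uᵀ * U = 1 ∧
      ∃ hH : Y.IsHermitian, ∀ q : ℕ, Y ^ q = U * diagonal (fun i => hH.eigenvalues i ^ q) * Uᵀ := by
  have hH : Y.IsHermitian := by
    rw [Matrix.IsHermitian, conjTranspose_eq_transpose_of_trivial]; exact hY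
  let U : Matrix ι ι ℝ := hH.eigenvectorUnitary
  have hs : star U = Uᵀ := by rw [star_eq_conjTranspose, conjTranspose_eq_transpose_of_trivial]
  have h1 : U * Uᵀ = 1 := by rw [← hs]; exact Unitary.coe_mul_star_self _
  have h2 : Uᵀ * U = 1 := by rw [← hs]; exact Unitary.coe_star_mul_self _
  have h3 : Y = U * diagonal hH.eigenvalues * Uᵀ := by
    conv_lhs => rw [hH.spectral_theorem, Unitary.conjStarAlgAut_apply]
    rw [← hs]
    rfl
  refine ⟨U, h1, h2, hH, fun q => ?_⟩
  generalize hH.eigenvalues = d at h3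
  induction q with
  | zero => simp [h1]
  | succ q ih =>
    rw [pow_succ, ih, h3]
    have : U * diagonal (fun i => d i ^ q) * Uᵀ * (U * diagonal d * Uᵀ)
        = U * diagonal (fun i => d i ^ q) * (Uᵀ * U) * diagonal d * Uᵀ := by
      simp only [Matrix.mul_assoc]
    rw [this, h2, Matrix.mul_one, Matrix.mul_assoc U, diagonal_mul_diagonal]
    simp only [pow_succ]

theorem pow_mul_pow_add_le_of_even {x y : ℝ} {j l s : ℕ} (h : j + l = 2 * s) :
    x ^ j * y ^ l + x ^ l * y ^ j ≤ x ^ (2 * s) + y ^ (2 * s) := by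
  have h1 : x ^ j * y ^ l ≤ |x| ^ j * |y| ^ l := by
    rw [← abs_pow, ← abs_pow, ← abs_mul]; exact le_abs_self _
  have h2 : x ^ l * y ^ j ≤ |x| ^ l * |y| ^ j := by
    rw [← abs_pow, ← abs_pow, ← abs_mul]; exact le_abs_self _
  have h3 : x ^ (2 * s) = |x| ^ j * |x| ^ l := by
    rw [← pow_add, h, Even.pow_abs (even_two_mul s)]
  have h4 : y ^ (2 * s) = |y| ^ j * |y| ^ l := by
    rw [← pow_add, h, Even.pow_abs (even_two_mul s)]
  have h5 : 0 ≤ (|x| ^ j - |y| ^ j) * (|x| ^ l - |y| ^ l) := by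
    rcases le_total |x| |y| with hxy | hxy
    · exact mul_nonneg_of_nonpos_of_nonpos
        (sub_nonpos.2 (pow_le_pow_left₀ (abs_nonneg _) hxy _))
        (sub_nonpos.2 (pow_le_pow_left₀ (abs_nonneg _) hxy _))
    · exact mul_nonneg
        (sub_nonneg.2 (pow_le_pow_left₀ (abs_nonneg _) hxy _))
        (sub_nonneg.2 (pow_le_pow_left₀ (abs_nonneg _) hxy _))
  nlinarith

theorem trace_mul_pow_mul_mul_pow_le {ι : Type*} [Fintype ι] [DecidableEq ι]
    {A Y : Matrix ι ι ℝ} (hA : A.IsSymm) (hY : Y.IsSymm) {j l s : ℕ} (h : j + l = 2 * s) :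
    trace (A * Y ^ j * A * Y ^ l) ≤ trace (A * A * Y ^ (2 * s)) := by
  obtain ⟨U, hU, hU', hH, hd⟩ := hY.exists_orthogonal_diagonal
  set d := hH.eigenvalues
  set S := Uᵀ * A * U with hS
  have hSs : ∀ a b, S a b = S b a := by
    have : Sᵀ = S := by
      rw [hS, transpose_mul, transpose_mul, transpose_transpose, hA.eq, Matrix.mul_assoc]
    intro a b
    conv_lhs => rw [← this, transpose_apply]
  have key : ∀ j l : ℕ, trace (A * Y ^ j * A * Y ^ l)
      = ∑ a, ∑ b, S a b ^ 2 * (d a ^ l * d b ^ j) := by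
    intro j l
    have e1 : A * Y ^ j * A * Y ^ l
        = A * U * diagonal (fun i => d i ^ j) * Uᵀ * A * U * diagonal (fun i => d i ^ l) * Uᵀ := by
      rw [hd, hd]; simp only [Matrix.mul_assoc]
    rw [e1, trace_mul_comm]
    have e2 : Uᵀ * (A * U * diagonal (fun i => d i ^ j) * Uᵀ * A * U * diagonal (fun i => d i ^ l))
        = S * diagonal (fun i => d i ^ j) * (S * diagonal (fun i => d i ^ l)) := by
      rw [hS]; simp only [Matrix.mul_assoc]
    rw [e2]
    simp only [trace, diag_apply, mul_apply (M := S * diagonal _), mul_diagonal]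
    refine Finset.sum_congr rfl fun a _ => Finset.sum_congr rfl fun b _ => ?_
    rw [hSs b a]; ring
  have k2 := key 0 (2 * s)
  rw [pow_zero, Matrix.mul_one] at k2
  rw [k2]
  have hsw : ∀ f : ι → ι → ℝ, ∑ a, ∑ b, S a b ^ 2 * f a b = ∑ a, ∑ b, S a b ^ 2 * f b a := by
    intro f
    rw [Finset.sum_comm]
    refine Finset.sum_congr rfl fun a _ => Finset.sum_congr rfl fun b _ => ?_
    rw [hSs]
  have l1 := hsw (fun a b => d a ^ l * d b ^ j)
  have l2 := hsw (fun a b => d a ^ (2 * s) * d b ^ 0)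
  have l3 : ∑ a, ∑ b, S a b ^ 2 * (d a ^ l * d b ^ j) + ∑ a, ∑ b, S a b ^ 2 * (d b ^ l * d a ^ j)
      ≤ ∑ a, ∑ b, S a b ^ 2 * (d a ^ (2 * s) * d b ^ 0)
        + ∑ a, ∑ b, S a b ^ 2 * (d b ^ (2 * s) * d a ^ 0) := by
    simp only [← Finset.sum_add_distrib, ← mul_add]
    refine Finset.sum_le_sum fun a _ => Finset.sum_le_sum fun b _ =>
      mul_le_mul_of_nonneg_left ?_ (sq_nonneg _)
    have := pow_mul_pow_add_le_of_even (x := d a) (y := d b) h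
    simp only [pow_zero, mul_one]
    linarith
  rw [key]
  linarith

section mp
variable {ι κ : Type*} [Fintype ι]
open MvPolynomial in
/-- The matrix series `∑ₖ Xₖ Aₖ` with polynomial variables as coefficients. -/
noncomputable def polySeries [Fintype κ] (A : κ → Matrix ι ι ℝ) : Matrix ι ι (MvPolynomial κ ℝ) :=
  ∑ k, (X k : MvPolynomial κ ℝ) • (A k).map C

theorem polySeries_map_eval [DecidableEq ι] [Fintype κ] (A : κ → Matrix ι ι ℝ) (x : κ → ℝ) :
    (MvPolynomial.eval x).mapMatrix (polySeries A) = ∑ k, x k • A k := by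
  ext i j
  simp [polySeries, Matrix.sum_apply]

theorem map_pderiv_mul (k : κ) (M N : Matrix ι ι (MvPolynomial κ ℝ)) :
    (M * N).map (MvPolynomial.pderiv k)
      = M.map (MvPolynomial.pderiv k) * N + M * N.map (MvPolynomial.pderiv k) := by
  ext i j : 1
  simp only [mul_apply, Matrix.add_apply, map_apply, map_sum, Derivation.leibniz, smul_eq_mul,
    Finset.sum_add_distrib]
  rw [add_comm]
  congr 1
  exact Finset.sum_congr rfl fun _ _ => mul_comm _ _

theorem map_pderiv_polySeries_pow [DecidableEq ι] [Fintype κ] [DecidableEq κ]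
    (A : κ → Matrix ι ι ℝ) (k : κ) (q : ℕ) :
    (polySeries A ^ q).map (MvPolynomial.pderiv k)
      = ∑ j ∈ Finset.range q, polySeries A ^ j * (A k).map MvPolynomial.C
          * polySeries A ^ (q - 1 - j) := by
  induction q with
  | zero =>
    ext i j : 1
    simp [Matrix.one_apply, apply_ite]
  | succ q ih =>
    have h1 : (polySeries A).map (MvPolynomial.pderiv k) = (A k).map MvPolynomial.C := by
      ext i j : 1
      simp [polySeries, Matrix.sum_apply, MvPolynomial.pderiv_X, Pi.single_apply]
    rw [pow_succ (polySeries A) q, map_pderiv_mul, ih, h1, Finset.sum_range_succ, Finset.sum_mul]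
    refine congrArg₂ (· + ·) (Finset.sum_congr rfl fun j hj => ?_) ?_
    · rw [Finset.mem_range] at hj
      rw [Matrix.mul_assoc _ _ (polySeries A), ← pow_succ,
        show q - 1 - j + 1 = q + 1 - 1 - j by omega]
    · rw [show q + 1 - 1 - q = 0 by omega, pow_zero, Matrix.mul_one]

theorem integral_trace_pow_succ [DecidableEq ι] [Fintype κ] [DecidableEq κ]
    (A : κ → Matrix ι ι ℝ) (q : ℕ) :
    ∫ x, trace ((∑ k, x k • A k) ^ (q + 1)) ∂(piGaussian κ)
      = ∫ x, ∑ k, ∑ j ∈ Finset.range q, trace (A k * (∑ k, x k • A k) ^ j * A k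
          * (∑ k, x k • A k) ^ (q - 1 - j)) ∂(piGaussian κ) := by
  have hC : ∀ (k : κ) (x : κ → ℝ), (MvPolynomial.eval x).mapMatrix ((A k).map MvPolynomial.C)
      = A k := by
    intro k x
    ext i j
    simp
  have hl : ∀ x : κ → ℝ, trace ((∑ k, x k • A k) ^ (q + 1))
      = ∑ k, MvPolynomial.eval x (MvPolynomial.X k
          * trace ((A k).map MvPolynomial.C * polySeries A ^ q)) := by
    intro x
    simp_rw [map_mul, MvPolynomial.eval_X, AddMonoidHom.map_trace]
    have : ∀ k, ((A k).map MvPolynomial.C * polySeries A ^ q).map (MvPolynomial.eval x)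
        = A k * (∑ k, x k • A k) ^ q := by
      intro k
      rw [← polySeries_map_eval, ← map_pow]
      conv_rhs => rw [← hC k x]
      rw [← map_mul]
      rfl
    simp_rw [this]
    rw [pow_succ', Finset.sum_mul, trace_sum]
    simp
  have hr : ∀ (k : κ) (x : κ → ℝ), MvPolynomial.eval x (MvPolynomial.pderiv k
        (trace ((A k).map MvPolynomial.C * polySeries A ^ q)))
      = ∑ j ∈ Finset.range q, trace (A k * (∑ k, x k • A k) ^ j * A k
          * (∑ k, x k • A k) ^ (q - 1 - j)) := by
    intro k x
    have h0 : ((A k).map MvPolynomial.C).map (MvPolynomial.pderiv k)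
        = (0 : Matrix ι ι (MvPolynomial κ ℝ)) := by
      ext i j : 1
      simp
    rw [AddMonoidHom.map_trace, map_pderiv_mul, h0, Matrix.zero_mul, zero_add,
      map_pderiv_polySeries_pow, AddMonoidHom.map_trace, ← trace_sum]
    congr 1
    have : ∀ M : Matrix ι ι (MvPolynomial κ ℝ), M.map (MvPolynomial.eval x)
      = (MvPolynomial.eval x).mapMatrix M := fun _ => rfl
    rw [this, map_mul, map_sum, Finset.mul_sum]
    simp_rw [map_mul, map_pow, hC, polySeries_map_eval, Matrix.mul_assoc]
  simp_rw [hl]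
  rw [integral_finsetSum _ fun k _ => integrable_eval_piGaussian _]
  simp_rw [integral_eval_X_mul_piGaussian, ← hr]
  rw [integral_finsetSum _ fun k _ => integrable_eval_piGaussian _]

end mp

theorem integrable_trace_mul_pow_mul_mul_pow {ι κ : Type*} [Fintype ι] [DecidableEq ι] [Fintype κ]
    (A : κ → Matrix ι ι ℝ) (M N : Matrix ι ι ℝ) (j l : ℕ) :
    Integrable (fun x : κ → ℝ => trace (M * (∑ k, x k • A k) ^ j * N * (∑ k, x k • A k) ^ l))
      (piGaussian κ) := by
  have h : ∀ x : κ → ℝ, trace (M * (∑ k, x k • A k) ^ j * N * (∑ k, x k • A k) ^ l)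
      = MvPolynomial.eval x (trace (M.map MvPolynomial.C * polySeries A ^ j
          * N.map MvPolynomial.C * polySeries A ^ l)) := by
    intro x
    have hC : ∀ M : Matrix ι ι ℝ,
        (MvPolynomial.eval x).mapMatrix (M.map MvPolynomial.C) = M := by
      intro M
      ext i j
      simp
    rw [AddMonoidHom.map_trace, ← polySeries_map_eval, ← map_pow, ← map_pow]
    conv_lhs => rw [← hC M, ← hC N]
    rw [← map_mul, ← map_mul, ← map_mul]
    rfl
  simp_rw [h]
  exact integrable_eval_piGaussian _

theorem integrable_trace_mul_pow {ι κ : Type*} [Fintype ι] [DecidableEq ι] [Fintype κ]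
    (A : κ → Matrix ι ι ℝ) (M : Matrix ι ι ℝ) (q : ℕ) :
    Integrable (fun x : κ → ℝ => trace (M * (∑ k, x k • A k) ^ q)) (piGaussian κ) := by
  simpa using integrable_trace_mul_pow_mul_mul_pow A M 1 0 q

theorem integrable_trace_pow {ι κ : Type*} [Fintype ι] [DecidableEq ι] [Fintype κ]
    (A : κ → Matrix ι ι ℝ) (q : ℕ) :
    Integrable (fun x : κ → ℝ => trace ((∑ k, x k • A k) ^ q)) (piGaussian κ) := by
  simpa using integrable_trace_mul_pow A 1 q

theorem integral_trace_pow_le {ι κ : Type*} [Fintype ι] [DecidableEq ι] [Fintype κ]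
    {A : κ → Matrix ι ι ℝ} (hA : ∀ k, (A k).IsSymm)
    (hV : (1 - ∑ k, A k * A k).PosSemidef) (p : ℕ) :
    ∫ x, trace ((∑ k, x k • A k) ^ (2 * (p + 1))) ∂(piGaussian κ)
      ≤ (2 * (p + 1)).factorial / (2 ^ (p + 1) * (p + 1).factorial) * trace (∑ k, A k * A k) := by
  classical
  have hYs : ∀ x : κ → ℝ, (∑ k, x k • A k).IsSymm := by
    intro x
    rw [Matrix.IsSymm, transpose_sum]
    exact Finset.sum_congr rfl fun k _ => by rw [transpose_smul, (hA k).eq]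
  have step : ∀ p : ℕ, ∫ x, trace ((∑ k, x k • A k) ^ (2 * (p + 1))) ∂(piGaussian κ)
      ≤ (2 * p + 1) * ∫ x, trace ((∑ k, A k * A k) * (∑ k, x k • A k) ^ (2 * p))
          ∂(piGaussian κ) := by
    intro p
    rw [show 2 * (p + 1) = (2 * p + 1) + 1 by ring, integral_trace_pow_succ, ← integral_const_mul]
    refine integral_mono (integrable_finsetSum _ fun k _ => integrable_finsetSum _ fun j _ =>
      integrable_trace_mul_pow_mul_mul_pow A _ _ _ _)
      ((integrable_trace_mul_pow A _ _).const_mul _) fun x => ?_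
    simp only
    rw [Finset.sum_mul, trace_sum, Finset.mul_sum]
    refine Finset.sum_le_sum fun k _ => ?_
    refine (Finset.sum_le_card_nsmul _ _ _ fun j hj =>
      trace_mul_pow_mul_mul_pow_le (hA k) (hYs x) (s := p) ?_).trans ?_
    · rw [Finset.mem_range] at hj
      omega
    · simp
  induction p with
  | zero =>
    refine (step 0).trans (le_of_eq ?_)
    simp
  | succ p ih =>
    refine (step (p + 1)).trans ?_
    have h1 : ∫ x, trace ((∑ k, A k * A k) * (∑ k, x k • A k) ^ (2 * (p + 1))) ∂(piGaussian κ)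
        ≤ ∫ x, trace ((∑ k, x k • A k) ^ (2 * (p + 1))) ∂(piGaussian κ) := by
      refine integral_mono (integrable_trace_mul_pow A _ _) (integrable_trace_pow A _) fun x => ?_
      have h2 := (hV.conjTranspose_mul_mul_same ((∑ k, x k • A k) ^ (p + 1))).trace_nonneg
      rw [conjTranspose_eq_transpose_of_trivial, transpose_pow, (hYs x).eq, trace_mul_comm,
        ← Matrix.mul_assoc, ← pow_add, trace_mul_comm, Matrix.sub_mul, Matrix.one_mul,
        trace_sub, ← two_mul] at h2
      simp only
      linarith
    refine (mul_le_mul_of_nonneg_left (h1.trans ih) (by positivity)).trans (le_of_eq ?_)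
    rw [show 2 * (p + 1 + 1) = 2 * (p + 1) + 1 + 1 by ring, Nat.factorial_succ (2 * (p + 1) + 1),
      Nat.factorial_succ (2 * (p + 1)), Nat.factorial_succ (p + 1)]
    push_cast
    have h3 : ((p + 1).factorial : ℝ) ≠ 0 := by positivity
    field_simp
    ring

theorem measureReal_sq_lt_le {ι κ : Type*} [Fintype ι] [DecidableEq ι] [Fintype κ]
    {A : κ → Matrix ι ι ℝ} (hA : ∀ k, (A k).IsSymm)
    (hV : (1 - ∑ k, A k * A k).PosSemidef) {m : ℝ} (hm : 1 ≤ m)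
    (htr : trace (∑ k, A k * A k) ≤ 2 * m)
    {σ : (κ → ℝ) → ℝ} (hσm : Measurable σ)
    (hσ : ∀ (x : κ → ℝ) (p : ℕ), 2 * (σ x ^ 2) ^ (p + 1) ≤ trace ((∑ k, x k • A k) ^ (2 * (p + 1))))
    {q : ℝ} (hq : 0 ≤ q) :
    (piGaussian κ).real {x | 2 * q < σ x ^ 2} ≤ 2 * m * Real.exp (-q) := by
  set E : Set (κ → ℝ) := {x | 2 * q < σ x ^ 2} with hE
  have hEm : MeasurableSet E := measurableSet_lt measurable_const (hσm.pow_const 2)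
  set P := (piGaussian κ).real E with hP
  have hterm : ∀ p : ℕ, 2 * P * ((2 * q) ^ (2 * p) / (2 * p).factorial)
      ≤ 2 * m * (q ^ p / p.factorial) := by
    intro p
    rcases p with _ | p
    · have : P ≤ 1 := measureReal_le_one
      simp
      linarith
    · have h1 : 2 * (2 * q) ^ (p + 1) * P
          ≤ ∫ x, trace ((∑ k, x k • A k) ^ (2 * (p + 1))) ∂(piGaussian κ) := by
        have h2 : 2 * (2 * q) ^ (p + 1) * P
            = ∫ x, E.indicator (fun _ => 2 * (2 * q) ^ (p + 1)) x ∂(piGaussian κ) := by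
          rw [integral_indicator_const _ hEm, smul_eq_mul, mul_comm]
        rw [h2]
        refine integral_mono ((integrable_const _).indicator hEm) (integrable_trace_pow A _)
          fun x => ?_
        refine le_trans ?_ (hσ x p)
        by_cases hx : x ∈ E
        · rw [Set.indicator_of_mem hx]
          have : 2 * q < σ x ^ 2 := hx
          gcongr
        · rw [Set.indicator_of_notMem hx]
          positivity
      have h2 := h1.trans (integral_trace_pow_le hA hV p)
      have h3 : 0 < ((2 * (p + 1)).factorial : ℝ) := by positivity
      have h4 : 0 < ((p + 1).factorial : ℝ) := by positivity
      have h5 := h2.trans (mul_le_mul_of_nonneg_left htr (by positivity))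
      have h6 := mul_le_mul_of_nonneg_right h5
        (show 0 ≤ (2 * q) ^ (p + 1) / ((2 * (p + 1)).factorial : ℝ) by positivity)
      calc _ = 2 * (2 * q) ^ (p + 1) * P * ((2 * q) ^ (p + 1) / ((2 * (p + 1)).factorial : ℝ)) := by
            rw [two_mul (p + 1), pow_add (2 * q)]; ring
        _ ≤ _ := h6
        _ = _ := by rw [mul_pow]; field_simp
  have hs1 := (Real.hasSum_cosh (2 * q)).mul_left (2 * P)
  have hs2 : HasSum (fun p : ℕ => 2 * m * (q ^ p / p.factorial)) (2 * m * Real.exp q) := by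
    have := NormedSpace.expSeries_div_hasSum_exp (𝔸 := ℝ) q
    rw [← Real.exp_eq_exp_ℝ] at this
    exact this.mul_left _
  have h := hasSum_le hterm hs1 hs2
  rw [Real.cosh_eq] at h
  have hP0 : 0 ≤ P := measureReal_nonneg
  have e1 : Real.exp (2 * q) = Real.exp q * Real.exp q := by rw [← Real.exp_add]; ring_nf
  have h2 : P * (Real.exp q * Real.exp q) ≤ 2 * m * Real.exp q := by
    have : 0 ≤ P * Real.exp (-(2 * q)) := by positivity
    rw [← e1]
    linarith
  have h3 : P * Real.exp q ≤ 2 * m := by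
    have := Real.exp_pos q
    refine le_of_mul_le_mul_right ?_ this
    linarith
  rw [Real.exp_neg, ← div_eq_mul_inv, le_div_iff₀ (Real.exp_pos q)]
  exact h3

theorem integral_sum_mul_pow_four_le {κ : Type*} [Fintype κ] (c : κ → ℝ) :
    ∫ x, (∑ k, x k * c k) ^ 4 ∂(piGaussian κ) ≤ 3 * (∑ k, c k ^ 2) ^ 2 := by
  set τ := ∑ k, c k ^ 2 with hτ
  have hτ0 : 0 ≤ τ := Finset.sum_nonneg fun k _ => sq_nonneg _
  rcases hτ0.eq_or_lt with h0 | h0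
  · have hc : ∀ k, c k = 0 := by
      intro k
      have := (Finset.sum_eq_zero_iff_of_nonneg fun k _ => sq_nonneg (c k)).1 (hτ ▸ h0.symm) k
        (Finset.mem_univ k)
      exact pow_eq_zero_iff two_ne_zero |>.1 this
    simp [hc, ← h0]
  · have hs : √τ ^ 2 = τ := Real.sq_sqrt hτ0
    have hs0 : √τ ≠ 0 := (Real.sqrt_pos.2 h0).ne'
    let A : κ → Matrix Unit Unit ℝ := fun k => diagonal fun _ => c k / √τ
    have hAA : ∑ k, A k * A k = 1 := by
      have : ∀ k, A k * A k = diagonal fun _ => c k ^ 2 / τ := by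
        intro k
        rw [diagonal_mul_diagonal]
        congr 1
        ext
        rw [div_mul_div_comm, ← sq, ← sq, hs]
      ext i j
      simp [this, Matrix.sum_apply, ← Finset.sum_div, ← hτ, h0.ne']
    have h := integral_trace_pow_le (A := A) (fun k => isSymm_diagonal _)
      (by rw [hAA, sub_self]; exact PosSemidef.zero) 1
    have hY : ∀ x : κ → ℝ, trace ((∑ k, x k • A k) ^ (2 * (1 + 1)))
        = (∑ k, x k * c k) ^ 4 / τ ^ 2 := by
      intro x
      have : ∑ k, x k • A k = diagonal fun _ => (∑ k, x k * c k) / √τ := by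
        ext i j
        simp [A, Matrix.sum_apply, Finset.sum_div, mul_div_assoc]
      rw [this, diagonal_pow]
      simp only [trace_diagonal, Finset.univ_unique, Pi.pow_apply, Finset.sum_const,
        Finset.card_singleton, one_smul, div_pow]
      rw [← hs]
      norm_num [← pow_mul]
    simp_rw [hY, integral_div, hAA] at h
    rw [div_le_iff₀ (by positivity)] at h
    refine h.trans (le_of_eq ?_)
    norm_num [Nat.factorial, trace_one]

section sigma
variable {n m : ℕ}

theorem sigmaMax_nonneg (G : Matrix (Fin n) (Fin m) ℝ) : 0 ≤ sigmaMax G := norm_nonneg _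

theorem norm_sq_toEuclideanLin (G : Matrix (Fin n) (Fin m) ℝ) (x : EuclideanSpace ℝ (Fin m)) :
    ‖Matrix.toEuclideanLin G x‖ ^ 2 = ∑ i, (∑ j, G i j * x j) ^ 2 := by
  rw [EuclideanSpace.norm_sq_eq]
  simp [Matrix.toLpLin_apply, Matrix.mulVec, dotProduct]

theorem sigmaMax_sq_le {G : Matrix (Fin n) (Fin m) ℝ} {c : ℝ} (hc : 0 ≤ c)
    (h : ∀ x : EuclideanSpace ℝ (Fin m),
      ‖Matrix.toEuclideanLin G x‖ ^ 2 ≤ c * ‖x‖ ^ 2) : sigmaMax G ^ 2 ≤ c := by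
  have : sigmaMax G ≤ √c := by
    refine ContinuousLinearMap.opNorm_le_bound _ (Real.sqrt_nonneg _) fun x => ?_
    rw [← Real.sqrt_sq (norm_nonneg x), ← Real.sqrt_mul hc]
    exact Real.le_sqrt_of_sq_le (h x)
  calc sigmaMax G ^ 2 ≤ √c ^ 2 := by gcongr; exact sigmaMax_nonneg G
    _ = c := Real.sq_sqrt hc

theorem sigmaMax_sq_le_sum_sq (G : Matrix (Fin n) (Fin m) ℝ) :
    sigmaMax G ^ 2 ≤ ∑ p, vecM G p ^ 2 := by
  refine sigmaMax_sq_le (Finset.sum_nonneg fun p _ => sq_nonneg _) fun x => ?_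
  rw [norm_sq_toEuclideanLin, Fintype.sum_prod_type_right, Finset.sum_mul]
  refine Finset.sum_le_sum fun i _ => ?_
  rw [EuclideanSpace.norm_sq_eq]
  simpa [vecM] using Finset.sum_mul_sq_le_sq_mul_sq Finset.univ (fun j => G i j) (fun j => x j)

theorem abs_vecM_le_sigmaMax (G : Matrix (Fin n) (Fin m) ℝ) (p : Fin m × Fin n) :
    |vecM G p| ≤ sigmaMax G := by
  have h1 : ‖Matrix.toEuclideanLin G (EuclideanSpace.single p.1 1)‖ ≤ sigmaMax G := by
    have := (LinearMap.toContinuousLinearMap (Matrix.toEuclideanLin G)).le_opNorm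
      (EuclideanSpace.single p.1 1)
    simpa [sigmaMax] using this
  refine le_trans ?_ h1
  have h2 := PiLp.norm_apply_le (Matrix.toEuclideanLin G (EuclideanSpace.single p.1 1)) p.2
  simpa [vecM] using h2

theorem continuous_sigmaMax : Continuous (sigmaMax : Matrix (Fin n) (Fin m) ℝ → ℝ) := by
  unfold sigmaMax
  exact continuous_norm.comp (LinearMap.continuous_of_finiteDimensional
    ((LinearMap.toContinuousLinearMap (𝕜 := ℝ) (E := EuclideanSpace ℝ (Fin m))
      (F' := EuclideanSpace ℝ (Fin n))).toLinearMap ∘ₗ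
      (Matrix.toEuclideanLin (𝕜 := ℝ) (m := Fin n) (n := Fin m)).toLinearMap))

theorem sigmaMax_sq_pow_le_trace (G : Matrix (Fin n) (Fin m) ℝ) (p : ℕ) :
    (sigmaMax G ^ 2) ^ (p + 1) ≤ trace ((Gᵀ * G) ^ (p + 1)) := by
  have hpsd : (Gᵀ * G).PosSemidef := by
    simpa [conjTranspose_eq_transpose_of_trivial] using posSemidef_conjTranspose_mul_self G
  obtain ⟨U, hU, hU', hH, hd⟩ := (show (Gᵀ * G).IsSymm by simp [Matrix.IsSymm]).exists_orthogonal_diagonal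
  have hd0 : ∀ i, 0 ≤ hH.eigenvalues i := hpsd.eigenvalues_nonneg
  set d := hH.eigenvalues
  have htr : trace ((Gᵀ * G) ^ (p + 1)) = ∑ i, d i ^ (p + 1) := by
    rw [hd, trace_mul_comm, ← Matrix.mul_assoc, hU', Matrix.one_mul, trace_diagonal]
  rw [htr]
  set τ := ∑ i, d i ^ (p + 1)
  have hτ : 0 ≤ τ := Finset.sum_nonneg fun i _ => pow_nonneg (hd0 i) _
  have hle : ∀ i, d i ≤ τ ^ ((1 : ℝ) / (p + 1 : ℕ)) := by
    intro i
    have h1 : d i ^ (p + 1) ≤ τ :=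
      Finset.single_le_sum (f := fun i => d i ^ (p + 1)) (fun i _ => pow_nonneg (hd0 i) _)
        (Finset.mem_univ i)
    have h2 := Real.rpow_le_rpow (pow_nonneg (hd0 i) _) h1
      (show (0 : ℝ) ≤ 1 / (p + 1 : ℕ) by positivity)
    rwa [one_div, Real.pow_rpow_inv_natCast (hd0 i) (Nat.succ_ne_zero p), ← one_div] at h2
  have hσ : sigmaMax G ^ 2 ≤ τ ^ ((1 : ℝ) / (p + 1 : ℕ)) := by
    refine sigmaMax_sq_le (by positivity) fun x => ?_
    have e1 : ‖Matrix.toEuclideanLin G x‖ ^ 2 = x.ofLp ⬝ᵥ (Gᵀ * G) *ᵥ x.ofLp := by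
      rw [EuclideanSpace.norm_sq_eq, ← mulVec_mulVec, dotProduct_mulVec, vecMul_transpose]
      simp [dotProduct, Matrix.toLpLin_apply, sq]
    have e2 : ‖x‖ ^ 2 = ∑ i, (Uᵀ *ᵥ x.ofLp) i ^ 2 := by
      have : ∑ i, (Uᵀ *ᵥ x.ofLp) i ^ 2 = (Uᵀ *ᵥ x.ofLp) ⬝ᵥ (Uᵀ *ᵥ x.ofLp) := by
        simp [dotProduct, sq]
      rw [this, dotProduct_mulVec, vecMul_transpose, mulVec_mulVec, hU, one_mulVec,
        EuclideanSpace.norm_sq_eq]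
      simp [dotProduct, sq]
    have e3 : x.ofLp ⬝ᵥ (Gᵀ * G) *ᵥ x.ofLp = ∑ i, d i * (Uᵀ *ᵥ x.ofLp) i ^ 2 := by
      have h1 := hd 1
      simp only [pow_one] at h1
      rw [h1, ← mulVec_mulVec, ← mulVec_mulVec, dotProduct_mulVec, ← mulVec_transpose]
      simp only [dotProduct, mulVec_diagonal]
      refine Finset.sum_congr rfl fun i _ => by ring
    rw [e1, e2, e3, Finset.mul_sum]
    exact Finset.sum_le_sum fun i _ => mul_le_mul_of_nonneg_right (hle i) (sq_nonneg _)
  calc (sigmaMax G ^ 2) ^ (p + 1) ≤ (τ ^ ((1 : ℝ) / (p + 1 : ℕ))) ^ (p + 1) := by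
        gcongr
    _ = τ := by rw [one_div, Real.rpow_inv_natCast_pow hτ (Nat.succ_ne_zero p)]

/-- The symmetric dilation of a rectangular matrix. -/
def symDilation (G : Matrix (Fin n) (Fin m) ℝ) : Matrix (Fin n ⊕ Fin m) (Fin n ⊕ Fin m) ℝ :=
  fromBlocks 0 G Gᵀ 0

theorem isSymm_symDilation (G : Matrix (Fin n) (Fin m) ℝ) : (symDilation G).IsSymm := by
  rw [Matrix.IsSymm, symDilation, fromBlocks_transpose]
  simp

theorem symDilation_mul_self (G : Matrix (Fin n) (Fin m) ℝ) :
    symDilation G * symDilation G = fromBlocks (G * Gᵀ) 0 0 (Gᵀ * G) := by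
  rw [symDilation, fromBlocks_multiply]
  simp

theorem sum_smul_symDilation {κ : Type*} [Fintype κ] (B : κ → Matrix (Fin n) (Fin m) ℝ)
    (x : κ → ℝ) : ∑ k, x k • symDilation (B k) = symDilation (∑ k, x k • B k) := by
  ext i j
  rcases i with i | i <;> rcases j with j | j <;> simp [symDilation, Matrix.sum_apply]

theorem trace_fromBlocks_eq (C : Matrix (Fin n) (Fin n) ℝ) (C' : Matrix (Fin n) (Fin m) ℝ)
    (D' : Matrix (Fin m) (Fin n) ℝ) (D : Matrix (Fin m) (Fin m) ℝ) :
    trace (fromBlocks C C' D' D) = trace C + trace D := by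
  simp [trace, Fintype.sum_sum_type]

theorem sum_fromBlocks_diag {κ : Type*} [Fintype κ] (C : κ → Matrix (Fin n) (Fin n) ℝ)
    (D : κ → Matrix (Fin m) (Fin m) ℝ) :
    ∑ k, fromBlocks (C k) 0 0 (D k) = fromBlocks (∑ k, C k) 0 0 (∑ k, D k) := by
  ext i j
  rcases i with i | i <;> rcases j with j | j <;> simp [Matrix.sum_apply]

theorem two_mul_sigmaMax_sq_pow_le_trace (G : Matrix (Fin n) (Fin m) ℝ) (p : ℕ) :
    2 * (sigmaMax G ^ 2) ^ (p + 1) ≤ trace (symDilation G ^ (2 * (p + 1))) := by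
  have h1 : trace ((G * Gᵀ) ^ (p + 1)) = trace ((Gᵀ * G) ^ (p + 1)) := by
    have : ∀ p : ℕ, (G * Gᵀ) ^ (p + 1) = G * ((Gᵀ * G) ^ p * Gᵀ) := by
      intro p
      induction p with
      | zero => simp
      | succ p ih => rw [pow_succ, ih, pow_succ]; simp only [Matrix.mul_assoc]
    rw [this, trace_mul_comm, Matrix.mul_assoc, ← pow_succ]
  rw [pow_mul, sq (symDilation G), symDilation_mul_self, fromBlocks_diagonal_pow,
    trace_fromBlocks_eq, h1]
  have := sigmaMax_sq_pow_le_trace G p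
  linarith

theorem measureReal_sigmaMax_sq_lt_le {κ : Type*} [Fintype κ] (hm : 1 ≤ m)
    (B : κ → Matrix (Fin n) (Fin m) ℝ) (hBtB : ∑ k, (B k)ᵀ * B k = 1)
    (hBBt : ((1 : Matrix (Fin n) (Fin n) ℝ) - ∑ k, B k * (B k)ᵀ).PosSemidef)
    {q : ℝ} (hq : 0 ≤ q) :
    (piGaussian κ).real {x | 2 * q < sigmaMax (∑ k, x k • B k) ^ 2} ≤ 2 * m * Real.exp (-q) := by
  have hV : ∑ k, symDilation (B k) * symDilation (B k)
      = fromBlocks (∑ k, B k * (B k)ᵀ) 0 0 (∑ k, (B k)ᵀ * B k) := by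
    simp_rw [symDilation_mul_self, sum_fromBlocks_diag]
  refine measureReal_sq_lt_le (A := fun k => symDilation (B k)) (fun k => isSymm_symDilation _)
    ?_ (by exact_mod_cast hm) ?_ ?_ (fun x p => ?_) hq
  · rw [hV, hBtB, ← fromBlocks_one, sub_eq_add_neg, fromBlocks_neg, fromBlocks_add]
    simp only [neg_zero, add_zero, add_neg_cancel, ← sub_eq_add_neg]
    have h := hBBt.conjTranspose_mul_mul_same
      (fromCols (1 : Matrix (Fin n) (Fin n) ℝ) (0 : Matrix (Fin n) (Fin m) ℝ))
    convert h using 1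
    rw [conjTranspose_fromCols_eq_fromRows_conjTranspose, fromRows_mul, fromRows_mul_fromCols]
    simp
  · rw [hV, trace_fromBlocks_eq, trace_sum]
    simp_rw [trace_mul_comm (B _) (B _)ᵀ]
    rw [← trace_sum, hBtB]
    simp
    linarith
  · exact (continuous_sigmaMax.comp (by fun_prop)).measurable
  · rw [sum_smul_symDilation]
    exact two_mul_sigmaMax_sq_pow_le_trace _ _
end sigma

theorem integral_mul_exp_neg_sq_gaussianReal {a : ℝ} (ha : 0 ≤ a) (f : ℝ → ℝ) :
    ∫ x, f x * Real.exp (-(a * x ^ 2)) ∂(gaussianReal 0 1)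
      = (√(1 + 2 * a))⁻¹ * ∫ x, f x ∂(gaussianReal 0 (1 + 2 * a)⁻¹.toNNReal) := by
  have hb : 0 < 1 + 2 * a := by linarith
  have hv : (1 + 2 * a)⁻¹.toNNReal ≠ 0 := by
    simpa using hb
  rw [integral_gaussianReal_eq_integral_smul one_ne_zero,
    integral_gaussianReal_eq_integral_smul hv, ← integral_const_mul]
  refine integral_congr_ae (Filter.Eventually.of_forall fun x => ?_)
  simp only [smul_eq_mul, gaussianPDFReal_def, NNReal.coe_one, mul_one, sub_zero,
    Real.coe_toNNReal _ (inv_nonneg.2 hb.le)]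
  have e1 : Real.exp (-x ^ 2 / (2 * (1 + 2 * a)⁻¹))
      = Real.exp (-x ^ 2 / 2) * Real.exp (-(a * x ^ 2)) := by
    rw [← Real.exp_add]
    congr 1
    field_simp
    ring
  have h2 : √(1 + 2 * a) ≠ 0 := (Real.sqrt_pos.2 hb).ne'
  rw [e1, Real.sqrt_mul (by positivity) (1 + 2 * a)⁻¹, Real.sqrt_inv]
  have h3 : √(2 * Real.pi) ≠ 0 := (Real.sqrt_pos.2 (by positivity)).ne'
  field_simp

theorem integral_exp_neg_sq_gaussianReal {a : ℝ} (ha : 0 ≤ a) :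
    ∫ x, Real.exp (-(a * x ^ 2)) ∂(gaussianReal 0 1) = (√(1 + 2 * a))⁻¹ := by
  simpa using integral_mul_exp_neg_sq_gaussianReal ha fun _ => 1

theorem integral_id_mul_exp_neg_sq_gaussianReal {a : ℝ} (ha : 0 ≤ a) :
    ∫ x, x * Real.exp (-(a * x ^ 2)) ∂(gaussianReal 0 1) = 0 := by
  simpa using integral_mul_exp_neg_sq_gaussianReal ha fun x => x

theorem integral_sq_mul_exp_neg_sq_gaussianReal {a : ℝ} (ha : 0 ≤ a) :
    ∫ x, x ^ 2 * Real.exp (-(a * x ^ 2)) ∂(gaussianReal 0 1)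
      = (1 + 2 * a)⁻¹ * (√(1 + 2 * a))⁻¹ := by
  rw [integral_mul_exp_neg_sq_gaussianReal ha fun x => x ^ 2]
  have h := variance_fun_id_gaussianReal (μ := 0) (v := (1 + 2 * a)⁻¹.toNNReal)
  rw [variance_of_integral_eq_zero (by fun_prop) (by simp)] at h
  rw [h, Real.coe_toNNReal _ (inv_nonneg.2 (by linarith)), mul_comm]

theorem integrable_pow_mul_exp_neg_sq_gaussianReal {a : ℝ} (ha : 0 ≤ a) (b : ℕ) :
    Integrable (fun x : ℝ => x ^ b * Real.exp (-(a * x ^ 2))) (gaussianReal 0 1) := by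
  refine (integrable_pow_gaussianReal b).mul_bdd (c := 1) (by fun_prop)
    (Filter.Eventually.of_forall fun x => ?_)
  rw [Real.norm_eq_abs, Real.abs_exp, Real.exp_le_one_iff]
  nlinarith [sq_nonneg x]

theorem mul_exp_neg_sum_eq_prod {κ : Type*} [Fintype κ] [DecidableEq κ] (a : κ → ℝ)
    (i j : κ) (x : κ → ℝ) :
    x i * x j * Real.exp (-∑ k, a k * x k ^ 2)
      = ∏ k, (x k ^ ((if k = i then 1 else 0) + if k = j then 1 else 0)
          * Real.exp (-(a k * x k ^ 2))) := by
  rw [Finset.prod_mul_distrib, ← Real.exp_sum, Finset.sum_neg_distrib]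
  simp_rw [pow_add, Finset.prod_mul_distrib]
  simp

theorem integral_mul_exp_neg_sum {κ : Type*} [Fintype κ] [DecidableEq κ] {a : κ → ℝ}
    (ha : ∀ k, 0 ≤ a k) (i j : κ) :
    ∫ x, x i * x j * Real.exp (-∑ k, a k * x k ^ 2) ∂(piGaussian κ)
      = if i = j then (1 + 2 * a i)⁻¹ * ∏ k, (√(1 + 2 * a k))⁻¹ else 0 := by
  simp_rw [mul_exp_neg_sum_eq_prod]
  rw [integral_fintype_prod_eq_prod (fun k (y : ℝ) =>
    y ^ ((if k = i then 1 else 0) + if k = j then 1 else 0) * Real.exp (-(a k * y ^ 2)))]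
  split_ifs with hij
  · subst hij
    rw [← Finset.mul_prod_erase _ _ (Finset.mem_univ i),
      ← Finset.mul_prod_erase Finset.univ (fun k => (√(1 + 2 * a k))⁻¹) (Finset.mem_univ i),
      ← mul_assoc]
    congr 1
    · simpa using integral_sq_mul_exp_neg_sq_gaussianReal (ha i)
    · refine Finset.prod_congr rfl fun k hk => ?_
      simpa [Finset.ne_of_mem_erase hk] using integral_exp_neg_sq_gaussianReal (ha k)
  · refine Finset.prod_eq_zero (Finset.mem_univ i) ?_
    simpa [hij] using integral_id_mul_exp_neg_sq_gaussianReal (ha i)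

theorem integral_sq_sum_mul_exp_neg_sum {κ : Type*} [Fintype κ] {a : κ → ℝ}
    (ha : ∀ k, 0 ≤ a k) (c : κ → ℝ) :
    ∫ x, (∑ k, x k * c k) ^ 2 * Real.exp (-∑ k, a k * x k ^ 2) ∂(piGaussian κ)
      = ∑ i, c i ^ 2 * ((1 + 2 * a i)⁻¹ * ∏ k, (√(1 + 2 * a k))⁻¹) := by
  classical
  have h : ∀ x : κ → ℝ, (∑ k, x k * c k) ^ 2 * Real.exp (-∑ k, a k * x k ^ 2)
      = ∑ i, ∑ j, c i * c j * (x i * x j * Real.exp (-∑ k, a k * x k ^ 2)) := by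
    intro x
    rw [sq, Finset.sum_mul_sum, Finset.sum_mul]
    refine Finset.sum_congr rfl fun i _ => ?_
    rw [Finset.sum_mul]
    exact Finset.sum_congr rfl fun j _ => by ring
  have hprodInt : ∀ i j, Integrable (fun x : κ → ℝ => x i * x j * Real.exp (-∑ k, a k * x k ^ 2))
      (piGaussian κ) := by
    intro i j
    simp_rw [mul_exp_neg_sum_eq_prod]
    exact Integrable.fintype_prod fun k => integrable_pow_mul_exp_neg_sq_gaussianReal (ha k) _
  simp_rw [h]
  rw [integral_finsetSum _ fun i _ => integrable_finsetSum _ fun j _ => (hprodInt i j).const_mul _]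
  refine Finset.sum_congr rfl fun i _ => ?_
  rw [integral_finsetSum _ fun j _ => (hprodInt i j).const_mul _]
  simp_rw [integral_const_mul, integral_mul_exp_neg_sum ha]
  simp [sq]

theorem map_mulVec_piGaussian {κ : Type*} [Fintype κ] [DecidableEq κ] {U : Matrix κ κ ℝ}
    (hU : Uᵀ * U = 1) : (piGaussian κ).map (fun x => U *ᵥ x) = piGaussian κ := by
  let f : EuclideanSpace ℝ κ →ₗᵢ[ℝ] EuclideanSpace ℝ κ :=
    { Matrix.toEuclideanLin U with
      norm_map' := by
        intro x
        have h : ‖Matrix.toEuclideanLin U x‖ ^ 2 = ‖x‖ ^ 2 := by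
          have e1 : ‖Matrix.toEuclideanLin U x‖ ^ 2 = x.ofLp ⬝ᵥ (Uᵀ * U) *ᵥ x.ofLp := by
            rw [EuclideanSpace.norm_sq_eq, ← mulVec_mulVec, dotProduct_mulVec, vecMul_transpose]
            simp [dotProduct, Matrix.toLpLin_apply, sq]
          rw [e1, hU, one_mulVec, EuclideanSpace.norm_sq_eq]
          simp [dotProduct, sq]
        exact (sq_eq_sq₀ (norm_nonneg _) (norm_nonneg _)).1 h }
  let g : EuclideanSpace ℝ κ ≃ₗᵢ[ℝ] EuclideanSpace ℝ κ := f.toLinearIsometryEquiv rfl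
  have h1 : (fun x : κ → ℝ => U *ᵥ x) = WithLp.ofLp ∘ g ∘ (WithLp.toLp 2) := by
    ext x : 1
    simp [g, f, Matrix.toLpLin_apply]
  rw [h1, ← Measure.map_map (by fun_prop) (by fun_prop),
    ← Measure.map_map (by fun_prop) (by fun_prop), map_pi_eq_stdGaussian, stdGaussian_map,
    ← map_pi_eq_stdGaussian, Measure.map_map (by fun_prop) (by fun_prop)]
  exact Measure.map_id

theorem sum_log_one_add_le {κ : Type*} (s : Finset κ) {y : κ → ℝ} (hy : ∀ k, 0 ≤ y k)
    {N : ℝ} (hN : 0 < N) (hcard : ((s.filter fun k => y k ≠ 0).card : ℝ) ≤ N) :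
    ∑ k ∈ s, Real.log (1 + y k) ≤ N * Real.log (1 + (∑ k ∈ s, y k) / N) := by
  set F := s.filter fun k => y k ≠ 0 with hF
  set A := 1 + (∑ k ∈ s, y k) / N with hAdef
  have hS : 0 ≤ ∑ k ∈ s, y k := Finset.sum_nonneg fun k _ => hy k
  have hA : 0 < A := by positivity
  have e1 : ∑ k ∈ s, Real.log (1 + y k) = ∑ k ∈ F, Real.log (1 + y k) := by
    rw [hF, Finset.sum_filter_of_ne]
    intro k _ hk h0
    simp [h0] at hk
  have e2 : ∑ k ∈ F, y k = N * (A - 1) := by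
    rw [hF, Finset.sum_filter_ne_zero, hAdef]
    field_simp
    ring
  rw [e1]
  have h1 : ∑ k ∈ F, Real.log (1 + y k) ≤ ∑ k ∈ F, (Real.log A + (1 + y k) / A - 1) := by
    refine Finset.sum_le_sum fun k _ => ?_
    have hk : 0 < 1 + y k := by linarith [hy k]
    have := Real.log_le_sub_one_of_pos (div_pos hk hA)
    rw [Real.log_div hk.ne' hA.ne'] at this
    linarith
  have h2 : ∑ k ∈ F, (Real.log A + (1 + y k) / A - 1)
      = F.card * Real.log A + (N - F.card) * (1 - A⁻¹) := by
    rw [Finset.sum_sub_distrib, Finset.sum_add_distrib, ← Finset.sum_div, Finset.sum_add_distrib,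
      e2]
    simp only [Finset.sum_const, nsmul_eq_mul, mul_one]
    field_simp
    ring
  have h3 := mul_le_mul_of_nonneg_left (Real.one_sub_inv_le_log_of_pos hA) (sub_nonneg.2 hcard)
  linarith

theorem rpow_mul_rpow_le_prod_inv_sqrt {κ : Type*} [Fintype κ] {w : κ → ℝ}
    (hw : ∀ k, 0 ≤ w k) {N : ℝ} (hN : 0 < N)
    (hcard : (Fintype.card {k // w k ≠ 0} : ℝ) ≤ N + 1) {i : κ} (hi : w i ≠ 0)
    {t : ℝ} (ht : 0 ≤ t) :
    (1 + 2 * t * (∑ k, w k - w i) / N) ^ (-(N / 2)) * (1 + 2 * t * w i) ^ (-(3 / 2 : ℝ))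
      ≤ (1 + 2 * (t * w i))⁻¹ * ∏ k, (√(1 + 2 * (t * w k)))⁻¹ := by
  classical
  have hpos : ∀ k, 0 < 1 + 2 * (t * w k) := fun k => by have := hw k; positivity
  have hsum : ∑ k, w k - w i = ∑ k ∈ Finset.univ.erase i, w k := by
    rw [← Finset.add_sum_erase _ _ (Finset.mem_univ i)]; ring
  have hc : (((Finset.univ.erase i).filter fun k => 2 * (t * w k) ≠ 0).card : ℝ) ≤ N := by
    have h1 : ((Finset.univ.erase i).filter fun k => 2 * (t * w k) ≠ 0)
        ⊆ (Finset.univ.filter fun k => w k ≠ 0).erase i := by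
      intro k hk
      simp only [Finset.mem_filter, Finset.mem_erase, Finset.mem_univ, and_true, true_and] at hk ⊢
      exact ⟨hk.1, fun h => hk.2 (by simp [h])⟩
    have h2 := Finset.card_le_card h1
    rw [Finset.card_erase_of_mem (by simpa using hi)] at h2
    rw [Fintype.card_subtype] at hcard
    have h3 : 1 ≤ (Finset.univ.filter fun k => w k ≠ 0).card :=
      Finset.card_pos.2 ⟨i, by simpa using hi⟩
    have h4 : (((Finset.univ.erase i).filter fun k => 2 * (t * w k) ≠ 0).card : ℝ) + 1
        ≤ (Finset.univ.filter fun k => w k ≠ 0).card := by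
      have h5 := (Nat.le_sub_iff_add_le h3).1 h2
      exact_mod_cast h5
    linarith
  have hlog := sum_log_one_add_le (Finset.univ.erase i) (y := fun k => 2 * (t * w k))
    (fun k => by have := hw k; positivity) hN hc
  have hA : 1 + (∑ k ∈ Finset.univ.erase i, 2 * (t * w k)) / N
      = 1 + 2 * t * (∑ k, w k - w i) / N := by
    rw [hsum, ← Finset.mul_sum, ← Finset.mul_sum, mul_assoc]
  rw [hA] at hlog
  have hApos : 0 < 1 + 2 * t * (∑ k, w k - w i) / N := by
    rw [← hA]
    have : 0 ≤ ∑ k ∈ Finset.univ.erase i, 2 * (t * w k) :=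
      Finset.sum_nonneg fun k _ => by have := hw k; positivity
    positivity
  have hP : ∏ k ∈ Finset.univ.erase i, (√(1 + 2 * (t * w k)))⁻¹
      = Real.exp (-(∑ k ∈ Finset.univ.erase i, Real.log (1 + 2 * (t * w k))) / 2) := by
    rw [← Finset.sum_neg_distrib, Finset.sum_div, Real.exp_sum]
    refine Finset.prod_congr rfl fun k _ => ?_
    rw [neg_div, Real.exp_neg, ← Real.log_sqrt (hpos k).le, Real.exp_log (Real.sqrt_pos.2 (hpos k))]
  have h1 : (1 + 2 * t * (∑ k, w k - w i) / N) ^ (-(N / 2))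
      ≤ ∏ k ∈ Finset.univ.erase i, (√(1 + 2 * (t * w k)))⁻¹ := by
    rw [hP, Real.rpow_def_of_pos hApos, Real.exp_le_exp]
    linarith
  have h2 : (1 + 2 * t * w i) ^ (-(3 / 2 : ℝ))
      = (1 + 2 * (t * w i))⁻¹ * (√(1 + 2 * (t * w i)))⁻¹ := by
    rw [Real.sqrt_eq_rpow, ← Real.rpow_neg_one, ← Real.rpow_neg (hpos i).le,
      ← Real.rpow_add (hpos i), mul_assoc 2 t]
    norm_num
  rw [h2, ← Finset.mul_prod_erase _ _ (Finset.mem_univ i)]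
  have h3 := hpos i
  have h4 := mul_le_mul_of_nonneg_left h1
    (show 0 ≤ (1 + 2 * (t * w i))⁻¹ * (√(1 + 2 * (t * w i)))⁻¹ by positivity)
  rw [mul_comm]
  refine h4.trans (le_of_eq ?_)
  rw [mul_assoc]

theorem exists_spectral_lower_bound {ι κ : Type*} [Fintype ι] [Fintype κ]
    (Q : Matrix ι κ ℝ) (v : ι → ℝ) {N : ℝ} (hN : 0 < N) (hcard : (Fintype.card ι : ℝ) ≤ N + 1) :
    ∃ c w : κ → ℝ, (∀ i, 0 ≤ w i ∧ w i ≤ trace (Qᵀ * Q)) ∧ ∑ i, c i ^ 2 = ∑ k, (v ᵥ* Q) k ^ 2 ∧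
      ∀ t : ℝ, 0 ≤ t →
        ∑ i, c i ^ 2 * ((1 + 2 * t * (trace (Qᵀ * Q) - w i) / N) ^ (-(N / 2))
            * (1 + 2 * t * w i) ^ (-(3 / 2 : ℝ)))
          ≤ ∫ x, (v ⬝ᵥ (Q *ᵥ x)) ^ 2 * Real.exp (-(t * ∑ p, (Q *ᵥ x) p ^ 2)) ∂(piGaussian κ) := by
  classical
  have hpsd : (Qᵀ * Q).PosSemidef := by
    simpa [conjTranspose_eq_transpose_of_trivial] using posSemidef_conjTranspose_mul_self Q
  obtain ⟨U, hU, hU', hH, hd⟩ :=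
    (show (Qᵀ * Q).IsSymm by simp [Matrix.IsSymm]).exists_orthogonal_diagonal
  have hw : ∀ i, 0 ≤ hH.eigenvalues i := hpsd.eigenvalues_nonneg
  have hrank : Fintype.card {i // hH.eigenvalues i ≠ 0} ≤ Fintype.card ι := by
    rw [← hH.rank_eq_card_non_zero_eigs, rank_transpose_mul_self]
    exact rank_le_card_height Q
  have htr : trace (Qᵀ * Q) = ∑ i, hH.eigenvalues i := by
    simpa using hH.trace_eq_sum_eigenvalues
  have h1 := hd 1
  simp only [pow_one] at h1
  generalize hH.eigenvalues = w at hw hrank htr h1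
  set K := Q * U with hK
  have hKK : Kᵀ * K = diagonal w := by
    have : Kᵀ * K = (Uᵀ * U) * diagonal w * (Uᵀ * U) := by
      calc Kᵀ * K = Uᵀ * (Qᵀ * Q) * U := by
            rw [hK, transpose_mul]; simp only [Matrix.mul_assoc]
        _ = _ := by rw [h1]; simp only [Matrix.mul_assoc]
    rw [this, hU', Matrix.one_mul, Matrix.mul_one]
  have hc0 : ∀ i, w i = 0 → (v ᵥ* K) i = 0 := by
    intro i hi
    have h2 : ∑ p, K p i ^ 2 = 0 := by
      have := congrFun (congrFun hKK i) i
      rw [diagonal_apply_eq, hi, mul_apply] at this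
      simpa [sq] using this
    have h3 := (Finset.sum_eq_zero_iff_of_nonneg fun p _ => sq_nonneg (K p i)).1 h2
    have h4 : ∀ p, K p i = 0 := fun p =>
      (pow_eq_zero_iff two_ne_zero).1 (h3 p (Finset.mem_univ p))
    simp [vecMul, dotProduct, h4]
  refine ⟨v ᵥ* K, w, fun i => ⟨hw i, ?_⟩, ?_, fun t ht => ?_⟩
  · rw [htr]
    exact Finset.single_le_sum (fun k _ => hw k) (Finset.mem_univ i)
  · have e : ∀ u : κ → ℝ, ∑ i, u i ^ 2 = u ⬝ᵥ u := fun u => by simp [dotProduct, sq]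
    rw [e, e, hK, ← vecMul_vecMul, ← dotProduct_mulVec, ← mulVec_transpose U, mulVec_mulVec, hU,
      one_mulVec]
  · have hrot : ∫ x, (v ⬝ᵥ (Q *ᵥ x)) ^ 2 * Real.exp (-(t * ∑ p, (Q *ᵥ x) p ^ 2)) ∂(piGaussian κ)
        = ∫ x, (∑ k, x k * (v ᵥ* K) k) ^ 2 * Real.exp (-∑ k, t * w k * x k ^ 2)
            ∂(piGaussian κ) := by
      conv_lhs => rw [← map_mulVec_piGaussian hU']
      rw [integral_map (by fun_prop) (by fun_prop)]
      refine integral_congr_ae (Filter.Eventually.of_forall fun x => ?_)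
      simp only
      have e1 : v ⬝ᵥ (Q *ᵥ (U *ᵥ x)) = ∑ k, x k * (v ᵥ* K) k := by
        rw [mulVec_mulVec, ← hK, dotProduct_mulVec]
        simp [dotProduct, mul_comm]
      have e2 : ∑ p, (Q *ᵥ (U *ᵥ x)) p ^ 2 = ∑ k, w k * x k ^ 2 := by
        rw [mulVec_mulVec, ← hK]
        have e : ∀ M : Matrix ι κ ℝ, ∑ p, (M *ᵥ x) p ^ 2 = x ⬝ᵥ ((Mᵀ * M) *ᵥ x) := by
          intro M
          rw [← mulVec_mulVec, dotProduct_mulVec, vecMul_transpose]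
          simp [dotProduct, sq]
        rw [e K, hKK]
        simp only [dotProduct, mulVec_diagonal]
        exact Finset.sum_congr rfl fun k _ => by ring
      rw [e1, e2, Finset.mul_sum]
      simp_rw [mul_assoc]
    rw [hrot, integral_sq_sum_mul_exp_neg_sum (fun k => mul_nonneg ht (hw k))]
    refine Finset.sum_le_sum fun i _ => ?_
    by_cases hi : w i = 0
    · simp [hc0 i hi]
    · refine mul_le_mul_of_nonneg_left ?_ (sq_nonneg _)
      rw [htr]
      refine rpow_mul_rpow_le_prod_inv_sqrt hw hN (le_trans ?_ hcard) hi ht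
      exact_mod_cast hrank

theorem betaNMT_le {n m : ℕ} (hm : 1 ≤ m) (hnm : 2 ≤ n * m) {T : ℝ} (hT : 0 ≤ T) {w : ℝ}
    (hw0 : 0 ≤ w) (hwm : w ≤ m) :
    betaNMT n m T ≤ ∫ t in (0 : ℝ)..T,
      (1 + 2 * t * (m - w) / ((n : ℝ) * m - 1)) ^ (-(((n : ℝ) * m - 1) / 2))
        * (1 + 2 * t * w) ^ (-(3 / 2 : ℝ)) := by
  have hm0 : (0 : ℝ) < m := by exact_mod_cast hm
  have hN : (0 : ℝ) < (n : ℝ) * m - 1 := by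
    have : (2 : ℝ) ≤ (n : ℝ) * m := by exact_mod_cast hnm
    linarith
  have hl : w / m ∈ Set.Icc (0 : ℝ) 1 := ⟨by positivity, (div_le_one hm0).2 hwm⟩
  unfold betaNMT
  refine (ciInf_le ?_ (⟨w / m, hl⟩ : Set.Icc (0 : ℝ) 1)).trans (le_of_eq ?_)
  · refine ⟨0, ?_⟩
    rintro _ ⟨l, rfl⟩
    refine intervalIntegral.integral_nonneg hT fun t ht => ?_
    have h0 := ht.1
    have h1 := l.2.1
    have h2 : 0 ≤ 1 - (l : ℝ) := sub_nonneg.2 l.2.2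
    positivity
  · refine intervalIntegral.integral_congr fun t _ => ?_
    have e1 : 2 * t * m * (1 - w / m) = 2 * t * (m - w) := by field_simp
    have e2 : 2 * t * m * (w / m) = 2 * t * w := by field_simp
    simp only [e1, e2]

theorem integral_exp_neg_mul_le {s S T : ℝ} (hs : 0 < s) (hsS : s ≤ S) (hT : 0 ≤ T) :
    ∫ t in (0 : ℝ)..T, Real.exp (-(t * S)) ≤ (1 - Real.exp (-(T * s))) / s := by
  have h1 : ∫ t in (0 : ℝ)..T, Real.exp (-(t * s)) = (1 - Real.exp (-(T * s))) / s := by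
    have hd : ∀ t ∈ Set.uIcc 0 T, HasDerivAt (fun t => -Real.exp (-(t * s)) / s)
        (Real.exp (-(t * s))) t := by
      intro t _
      have := ((((hasDerivAt_id t).mul_const s).neg).exp.neg).div_const s
      refine this.congr_deriv ?_
      simp
      field_simp
    rw [intervalIntegral.integral_eq_sub_of_hasDerivAt hd
      (Continuous.intervalIntegrable (by fun_prop) _ _)]
    simp
    ring
  rw [← h1]
  refine intervalIntegral.integral_mono_on hT (Continuous.intervalIntegrable (by fun_prop) _ _)
    (Continuous.intervalIntegrable (by fun_prop) _ _) fun t ht => ?_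
  rw [Real.exp_le_exp]
  have := mul_le_mul_of_nonneg_left hsS ht.1
  linarith

theorem integral_add_indicator_le_div {N s S T L : ℝ} (hs : 0 ≤ s) (hsS : s ≤ S)
    (h0 : s = 0 → N = 0) (hT : 0 ≤ T) (hL : 0 < L) :
    (∫ t in (0 : ℝ)..T, N ^ 2 * Real.exp (-(t * S)))
        + Real.exp (-2 * T * L) / (2 * L) * (N ^ 2 - if 2 * L < s then N ^ 2 else 0)
      ≤ N ^ 2 / s := by
  rcases hs.eq_or_lt with h | hs
  · simp [h0 h.symm]
  rw [intervalIntegral.integral_const_mul]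
  have h1 := mul_le_mul_of_nonneg_left (integral_exp_neg_mul_le hs hsS hT) (sq_nonneg N)
  have h2 : Real.exp (-2 * T * L) / (2 * L) * (N ^ 2 - if 2 * L < s then N ^ 2 else 0)
      ≤ N ^ 2 * (Real.exp (-(T * s)) / s) := by
    split_ifs with hlt
    · rw [sub_self, mul_zero]
      positivity
    · rw [sub_zero, mul_comm]
      have h3 := mul_le_mul_of_nonneg_left (not_lt.1 hlt) hT
      gcongr
      · linarith
      · exact not_lt.1 hlt
  refine (add_le_add h1 h2).trans (le_of_eq ?_)
  field_simp
  ring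

theorem intervalIntegrable_betaNMT_integrand {n m : ℕ} (hnm : 2 ≤ n * m) {T : ℝ} (hT : 0 ≤ T) {w : ℝ}
    (hw0 : 0 ≤ w) (hwm : w ≤ m) :
    IntervalIntegrable (fun t => (1 + 2 * t * (m - w) / ((n : ℝ) * m - 1)) ^
        (-(((n : ℝ) * m - 1) / 2)) * (1 + 2 * t * w) ^ (-(3 / 2 : ℝ))) volume 0 T := by
  have hN : (0 : ℝ) < (n : ℝ) * m - 1 := by
    have : (2 : ℝ) ≤ (n : ℝ) * m := by exact_mod_cast hnm
    linarith
  refine ContinuousOn.intervalIntegrable ?_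
  rw [Set.uIcc_of_le hT]
  refine ContinuousOn.mul ?_ ?_
  · refine ContinuousOn.rpow_const (by fun_prop) fun t ht => Or.inl ?_
    have h1 := ht.1
    have h2 := sub_nonneg.2 hwm
    positivity
  · refine ContinuousOn.rpow_const (by fun_prop) fun t ht => Or.inl ?_
    have h1 := ht.1
    positivity

section moments
variable {κ : Type*} [Fintype κ]

theorem integrable_sum_mul_pow (c : κ → ℝ) (q : ℕ) :
    Integrable (fun x : κ → ℝ => (∑ k, x k * c k) ^ q) (piGaussian κ) := by
  have := integrable_eval_piGaussian ((∑ k, MvPolynomial.X k * MvPolynomial.C (c k)) ^ q)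
  simpa using this

theorem integral_sum_mul_sq (c : κ → ℝ) :
    ∫ x, (∑ k, x k * c k) ^ 2 ∂(piGaussian κ) = ∑ k, c k ^ 2 := by
  simpa using integral_sq_sum_mul_exp_neg_sum (a := fun _ : κ => 0) (fun _ => le_rfl) c

theorem integral_indicator_sum_mul_sq_le {c : κ → ℝ} (hc : 0 < ∑ k, c k ^ 2)
    {E : Set (κ → ℝ)} (hE : MeasurableSet E) {δ : ℝ} (hδ : 0 < δ)
    (hP : (piGaussian κ).real E ≤ δ / 3) :
    ∫ x, E.indicator (fun x => (∑ k, x k * c k) ^ 2) x ∂(piGaussian κ)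
      ≤ √δ * ∑ k, c k ^ 2 := by
  set τ := ∑ k, c k ^ 2
  have hs : 0 < √δ := Real.sqrt_pos.2 hδ
  have hs2 : √δ ^ 2 = δ := Real.sq_sqrt hδ.le
  set b := 3 * τ / √δ with hb
  have hb0 : 0 < b := by positivity
  calc ∫ x, E.indicator (fun x => (∑ k, x k * c k) ^ 2) x ∂(piGaussian κ)
      ≤ ∫ x, ((∑ k, x k * c k) ^ 4 / (2 * b) + E.indicator (fun _ => b / 2) x)
          ∂(piGaussian κ) := by
        refine integral_mono ((integrable_sum_mul_pow c 2).indicator hE)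
          (((integrable_sum_mul_pow c 4).div_const _).add ((integrable_const _).indicator hE))
          fun x => ?_
        by_cases hx : x ∈ E
        · simp only [Set.indicator_of_mem hx]
          generalize ∑ k, x k * c k = y
          have : y ^ 4 / (2 * b) + b / 2 - y ^ 2 = (y ^ 2 - b) ^ 2 / (2 * b) := by
            field_simp
            ring
          have h2 : 0 ≤ (y ^ 2 - b) ^ 2 / (2 * b) := by positivity
          linarith
        · simp only [Set.indicator_of_notMem hx]
          positivity
    _ = (∫ x, (∑ k, x k * c k) ^ 4 ∂(piGaussian κ)) / (2 * b)
          + (piGaussian κ).real E * (b / 2) := by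
        rw [integral_add ((integrable_sum_mul_pow c 4).div_const _)
          ((integrable_const _).indicator hE), integral_div, integral_indicator_const _ hE,
          smul_eq_mul]
    _ ≤ 3 * τ ^ 2 / (2 * b) + δ / 3 * (b / 2) := by
        gcongr
        exact integral_sum_mul_pow_four_le c
    _ = √δ * τ := by
        rw [hb]
        nth_rewrite 2 [← hs2]
        field_simp
        ring

end moments

section laplace
variable {ι κ : Type*} [Fintype ι] [Fintype κ]

theorem dotProduct_mulVec_eq_sum (Q : Matrix ι κ ℝ) (v : ι → ℝ) (x : κ → ℝ) :
    v ⬝ᵥ (Q *ᵥ x) = ∑ k, x k * (v ᵥ* Q) k := by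
  rw [dotProduct_mulVec]
  simp [dotProduct, mul_comm]

theorem integrable_prod_sq_mul_exp (Q : Matrix ι κ ℝ) (v : ι → ℝ) (T : ℝ) :
    Integrable (Function.uncurry fun (x : κ → ℝ) (t : ℝ) =>
        (v ⬝ᵥ (Q *ᵥ x)) ^ 2 * Real.exp (-(t * ∑ p, (Q *ᵥ x) p ^ 2)))
      ((piGaussian κ).prod (volume.restrict (Set.Ioc 0 T))) := by
  have h := (integrable_sum_mul_pow (v ᵥ* Q) 2).comp_fst (volume.restrict (Set.Ioc 0 T))
  refine h.mono' (Continuous.aestronglyMeasurable (by unfold Function.uncurry; fun_prop)) ?_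
  have hmem : ∀ᵐ p ∂((piGaussian κ).prod (volume.restrict (Set.Ioc 0 T))), p.2 ∈ Set.Ioc 0 T :=
    Measure.quasiMeasurePreserving_snd.ae (ae_restrict_mem measurableSet_Ioc)
  filter_upwards [hmem] with p hp
  simp only [Function.uncurry, ← dotProduct_mulVec_eq_sum]
  rw [Real.norm_of_nonneg (by positivity)]
  refine mul_le_of_le_one_right (sq_nonneg _) (Real.exp_le_one_iff.2 ?_)
  have h0 : 0 ≤ p.2 := hp.1.le
  have h1 : 0 ≤ ∑ i, (Q *ᵥ p.1) i ^ 2 := Finset.sum_nonneg fun i _ => sq_nonneg _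
  have := mul_nonneg h0 h1
  linarith

theorem integrable_integral_sq_mul_exp (Q : Matrix ι κ ℝ) (v : ι → ℝ) {T : ℝ} (hT : 0 ≤ T) :
    Integrable (fun x : κ → ℝ => ∫ t in (0 : ℝ)..T,
      (v ⬝ᵥ (Q *ᵥ x)) ^ 2 * Real.exp (-(t * ∑ p, (Q *ᵥ x) p ^ 2))) (piGaussian κ) := by
  simp only [intervalIntegral.integral_of_le hT]
  exact (integrable_prod_sq_mul_exp Q v T).integral_prod_left

theorem betaNMT_mul_le_integral {n m : ℕ} (hm : 1 ≤ m) (hnm : 2 ≤ n * m) (Q : Matrix ι κ ℝ)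
    (v : ι → ℝ) (hcard : Fintype.card ι = n * m) (htr : trace (Qᵀ * Q) = m) {T : ℝ}
    (hT : 0 ≤ T) :
    betaNMT n m T * ∑ k, (v ᵥ* Q) k ^ 2 ≤ ∫ x, (∫ t in (0 : ℝ)..T,
      (v ⬝ᵥ (Q *ᵥ x)) ^ 2 * Real.exp (-(t * ∑ p, (Q *ᵥ x) p ^ 2))) ∂(piGaussian κ) := by
  have hN : (0 : ℝ) < (n : ℝ) * m - 1 := by
    have : (2 : ℝ) ≤ (n : ℝ) * m := by exact_mod_cast hnm
    linarith
  obtain ⟨c, w, hw, hc, hle⟩ := exists_spectral_lower_bound Q v hN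
    (by rw [hcard]; push_cast; linarith)
  rw [htr] at hw
  simp only [htr] at hle
  have hprodInt := integrable_prod_sq_mul_exp Q v T
  have hI := fun i => intervalIntegrable_betaNMT_integrand hnm hT (hw i).1 (hw i).2
  calc betaNMT n m T * ∑ k, (v ᵥ* Q) k ^ 2
      = ∑ i, c i ^ 2 * betaNMT n m T := by rw [← hc, mul_comm, Finset.sum_mul]
    _ ≤ ∑ i, c i ^ 2 * ∫ t in (0 : ℝ)..T,
          (1 + 2 * t * (m - w i) / ((n : ℝ) * m - 1)) ^ (-(((n : ℝ) * m - 1) / 2))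
            * (1 + 2 * t * w i) ^ (-(3 / 2 : ℝ)) :=
        Finset.sum_le_sum fun i _ => mul_le_mul_of_nonneg_left
          (betaNMT_le hm hnm hT (hw i).1 (hw i).2) (sq_nonneg _)
    _ = ∫ t in (0 : ℝ)..T, ∑ i, c i ^ 2 *
          ((1 + 2 * t * (m - w i) / ((n : ℝ) * m - 1)) ^ (-(((n : ℝ) * m - 1) / 2))
            * (1 + 2 * t * w i) ^ (-(3 / 2 : ℝ))) := by
        rw [intervalIntegral.integral_finsetSum fun i _ => (hI i).const_mul _]
        simp only [intervalIntegral.integral_const_mul]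
    _ ≤ ∫ t in (0 : ℝ)..T, ∫ x, (v ⬝ᵥ (Q *ᵥ x)) ^ 2 * Real.exp (-(t * ∑ p, (Q *ᵥ x) p ^ 2))
          ∂(piGaussian κ) := by
        refine intervalIntegral.integral_mono_on hT ?_ ?_ fun t ht => hle t ht.1
        · simpa only [Finset.sum_fn] using
            IntervalIntegrable.sum Finset.univ fun i _ => (hI i).const_mul (c i ^ 2)
        · rw [intervalIntegrable_iff_integrableOn_Ioc_of_le hT]
          exact hprodInt.integral_prod_right
    _ = _ := by
        simp only [intervalIntegral.integral_of_le hT]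
        exact (integral_integral_swap hprodInt).symm

end laplace

theorem map_pi_eq_piGaussian {κ Ω : Type*} [Fintype κ] [MeasurableSpace Ω] {μ : Measure Ω}
    [IsProbabilityMeasure μ] {z : κ → Ω → ℝ} (hindep : iIndepFun z μ)
    (hgauss : ∀ k, Measure.map (z k) μ = gaussianReal 0 1) :
    (∀ k, AEMeasurable (z k) μ) ∧ μ.map (fun ω k => z k ω) = piGaussian κ := by
  have hz : ∀ k, AEMeasurable (z k) μ := fun k => by
    refine AEMeasurable.of_map_ne_zero ?_
    rw [hgauss k]
    exact IsProbabilityMeasure.ne_zero _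
  refine ⟨hz, ?_⟩
  rw [(iIndepFun_iff_map_fun_eq_pi_map hz).1 hindep]
  simp only [hgauss]

theorem le_integral_sq_div_sigmaMax_sq {n m : ℕ} {κ : Type*} [Fintype κ] (hm : 1 ≤ m)
    (hnm : 2 ≤ n * m) (B : κ → Matrix (Fin n) (Fin m) ℝ)
    (hBtB : ∑ k, (B k)ᵀ * B k = 1)
    (hBBt : ((1 : Matrix (Fin n) (Fin n) ℝ) - ∑ k, B k * (B k)ᵀ).PosSemidef)
    {T : ℝ} (hT : 0 ≤ T) {δ : ℝ} (hδ : δ ∈ Set.Ioo (0 : ℝ) 1) (v : Fin m × Fin n → ℝ) :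
    (betaNMT n m T
        + (1 - √δ) * Real.exp (-2 * T * Real.log (6 * m / δ)) / (2 * Real.log (6 * m / δ)))
        * ∑ k, (v ⬝ᵥ vecM (B k)) ^ 2
      ≤ ∫ x, (v ⬝ᵥ vecM (∑ k, x k • B k)) ^ 2 / (sigmaMax (∑ k, x k • B k)) ^ 2
          ∂(piGaussian κ) := by
  obtain ⟨hδ0, hδ1⟩ := hδ
  have hm1 : (1 : ℝ) ≤ m := by exact_mod_cast hm
  have hlog : 1 < 6 * m / δ := by
    rw [lt_div_iff₀ hδ0]
    linarith
  set L := Real.log (6 * m / δ) with hL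
  have hL0 : 0 < L := Real.log_pos hlog
  set Q : Matrix (Fin m × Fin n) κ ℝ := Matrix.of fun p k => vecM (B k) p with hQ
  have hvec : ∀ x : κ → ℝ, vecM (∑ k, x k • B k) = Q *ᵥ x := fun x => by
    ext p
    simp [vecM, hQ, mulVec, dotProduct, Matrix.sum_apply, mul_comm]
  have hvQ : ∀ k, v ⬝ᵥ vecM (B k) = (v ᵥ* Q) k := fun k => by
    simp [hQ, vecMul, dotProduct]
  have htr : trace (Qᵀ * Q) = m := by
    have h1 := congrArg trace hBtB
    rw [trace_one, Fintype.card_fin, trace_sum] at h1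
    rw [← h1]
    simp [trace, mul_apply, hQ, vecM, Fintype.sum_prod_type]
  have hcard : Fintype.card (Fin m × Fin n) = n * m := by simp [mul_comm]
  have hσc : Continuous fun x : κ → ℝ => sigmaMax (∑ k, x k • B k) :=
    continuous_sigmaMax.comp (by fun_prop)
  have hle : ∀ x : κ → ℝ, |v ⬝ᵥ vecM (∑ k, x k • B k)|
      ≤ (∑ p, |v p|) * sigmaMax (∑ k, x k • B k) := fun x => by
    rw [dotProduct, Finset.sum_mul]
    refine (Finset.abs_sum_le_sum_abs _ _).trans (Finset.sum_le_sum fun p _ => ?_)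
    rw [abs_mul]
    exact mul_le_mul_of_nonneg_left (abs_vecM_le_sigmaMax _ p) (abs_nonneg _)
  have hFint : Integrable (fun x : κ → ℝ => (v ⬝ᵥ vecM (∑ k, x k • B k)) ^ 2
      / (sigmaMax (∑ k, x k • B k)) ^ 2) (piGaussian κ) := by
    refine Integrable.of_bound ?_ ((∑ p, |v p|) ^ 2) (Filter.Eventually.of_forall fun x => ?_)
    · simp only [hvec]
      exact ((show Continuous fun x : κ → ℝ => (v ⬝ᵥ (Q *ᵥ x)) ^ 2 by fun_prop).measurable.div
        (hσc.pow 2).measurable).aestronglyMeasurable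
    · rw [Real.norm_of_nonneg (by positivity)]
      refine div_le_of_le_mul₀ (sq_nonneg _) (sq_nonneg _) ?_
      rw [← mul_pow, ← sq_abs (v ⬝ᵥ _)]
      exact pow_le_pow_left₀ (abs_nonneg _) (hle x) 2
  set τ := ∑ k, (v ⬝ᵥ vecM (B k)) ^ 2 with hτ
  have hτQ : τ = ∑ k, (v ᵥ* Q) k ^ 2 := by simp only [hτ, hvQ]
  have hτ0 : 0 ≤ τ := Finset.sum_nonneg fun k _ => sq_nonneg _
  rcases hτ0.eq_or_lt with h0 | hτpos
  · rw [← h0, mul_zero]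
    exact integral_nonneg fun x => by positivity
  set E : Set (κ → ℝ) := {x | 2 * L < sigmaMax (∑ k, x k • B k) ^ 2} with hE
  have hEm : MeasurableSet E := measurableSet_lt measurable_const (hσc.pow 2).measurable
  have hP : (piGaussian κ).real E ≤ δ / 3 := by
    refine (measureReal_sigmaMax_sq_lt_le hm B hBtB hBBt hL0.le).trans (le_of_eq ?_)
    rw [Real.exp_neg, hL, Real.exp_log (by linarith)]
    field_simp
    norm_num
  have hind := integral_indicator_sum_mul_sq_le (hτQ ▸ hτpos) hEm hδ0 hP
  rw [← hτQ] at hind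
  set K := Real.exp (-2 * T * L) / (2 * L) with hK
  have hK0 : 0 ≤ K := by positivity
  have hA := betaNMT_mul_le_integral hm hnm Q v hcard htr hT
  rw [← hτQ] at hA
  have hAi := integrable_integral_sq_mul_exp Q v hT
  have hsq := integrable_sum_mul_pow (v ᵥ* Q) 2
  have hsqE := hsq.indicator hEm
  calc (betaNMT n m T + (1 - √δ) * Real.exp (-2 * T * L) / (2 * L)) * τ
      = betaNMT n m T * τ + K * (τ - √δ * τ) := by rw [hK]; ring
    _ ≤ (∫ x, (∫ t in (0 : ℝ)..T,
          (v ⬝ᵥ (Q *ᵥ x)) ^ 2 * Real.exp (-(t * ∑ p, (Q *ᵥ x) p ^ 2))) ∂(piGaussian κ))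
        + K * ((∫ x, (∑ k, x k * (v ᵥ* Q) k) ^ 2 ∂(piGaussian κ))
          - ∫ x, E.indicator (fun x => (∑ k, x k * (v ᵥ* Q) k) ^ 2) x ∂(piGaussian κ)) := by
        rw [integral_sum_mul_sq, ← hτQ]
        gcongr
    _ = ∫ x, ((∫ t in (0 : ℝ)..T,
          (v ⬝ᵥ (Q *ᵥ x)) ^ 2 * Real.exp (-(t * ∑ p, (Q *ᵥ x) p ^ 2)))
        + K * ((∑ k, x k * (v ᵥ* Q) k) ^ 2
          - E.indicator (fun x => (∑ k, x k * (v ᵥ* Q) k) ^ 2) x)) ∂(piGaussian κ) := by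
        rw [← integral_sub hsq hsqE, ← integral_const_mul]
        exact (integral_add hAi ((hsq.sub hsqE).const_mul K)).symm
    _ ≤ _ := by
        refine integral_mono (hAi.add ((hsq.sub hsqE).const_mul K)) hFint fun x => ?_
        have hS := sigmaMax_sq_le_sum_sq (∑ k, x k • B k)
        have hz : sigmaMax (∑ k, x k • B k) ^ 2 = 0 → v ⬝ᵥ vecM (∑ k, x k • B k) = 0 := by
          intro h
          have h1 := hle x
          rw [(pow_eq_zero_iff two_ne_zero).1 h, mul_zero] at h1
          exact abs_nonpos_iff.1 h1
        have := integral_add_indicator_le_div (sq_nonneg _) hS hz hT hL0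
        rw [hvec x] at this
        simp only [← dotProduct_mulVec_eq_sum, hvec x, Set.indicator_apply, hE, Set.mem_ofPred_eq]
        exact this

/-- Theorem EC.1.
For a Gaussian matrix series `G = ∑ₖ zₖ Bₖ` with `∑ₖ Bₖᵀ Bₖ = Iₘ`,
`∑ₖ Bₖ Bₖᵀ ⪯ Iₙ` and covariance `W = ∑ₖ vec(Bₖ)vec(Bₖ)ᵀ`, for every `T ≥ 0`
and `δ ∈ (0,1)`:
`E[vec(G)vec(G)ᵀ/σmax(G)²] ⪰ (β_{n,m}(T) + (1−√δ) e^{−2T log(6m/δ)}/(2 log(6m/δ))) W`. -/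
theorem stmt6 {n m r : ℕ} (hm : 1 ≤ m) (hmn : m ≤ n) (hnm2 : 2 ≤ n * m)
    (B : Fin r → Matrix (Fin n) (Fin m) ℝ)
    (hBtB : ∑ k, (B k)ᵀ * B k = 1)
    (hBBt : ((1 : Matrix (Fin n) (Fin n) ℝ) - ∑ k, B k * (B k)ᵀ).PosSemidef)
    {Ω : Type*} [MeasurableSpace Ω] (μ : Measure Ω) [IsProbabilityMeasure μ]
    (z : Fin r → Ω → ℝ)
    (hindep : iIndepFun z μ)
    (hgauss : ∀ k, Measure.map (z k) μ = gaussianReal 0 1)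
    (W : Matrix (Fin m × Fin n) (Fin m × Fin n) ℝ)
    (hW : W = ∑ k, Matrix.vecMulVec (vecM (B k)) (vecM (B k))) :
    ∀ T : ℝ, 0 ≤ T → ∀ δ : ℝ, δ ∈ Set.Ioo (0 : ℝ) 1 →
    ∀ v : Fin m × Fin n → ℝ,
      (betaNMT n m T
          + (1 - Real.sqrt δ) * Real.exp (-2 * T * Real.log (6 * m / δ))
              / (2 * Real.log (6 * m / δ)))
          * (v ⬝ᵥ W.mulVec v)
        ≤ ∫ ω, (∑ p : Fin m × Fin n, v p * vecM (∑ k, z k ω • B k) p) ^ 2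
              / (sigmaMax (∑ k, z k ω • B k)) ^ 2 ∂μ := by
  intro T hT δ hδ v
  have hτ : v ⬝ᵥ W.mulVec v = ∑ k, (v ⬝ᵥ vecM (B k)) ^ 2 := by
    rw [hW, sum_mulVec, dotProduct_sum]
    refine Finset.sum_congr rfl fun k _ => ?_
    rw [vecMulVec_mulVec, sq, dotProduct_smul, dotProduct_comm (vecM (B k)) v]
    simp
  obtain ⟨hz, hmap⟩ := map_pi_eq_piGaussian hindep hgauss
  have hmeas : Measurable fun x : Fin r → ℝ => (v ⬝ᵥ vecM (∑ k, x k • B k)) ^ 2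
      / (sigmaMax (∑ k, x k • B k)) ^ 2 := by
    refine Measurable.div (Continuous.measurable ?_) (Continuous.measurable ?_)
    · unfold vecM
      fun_prop
    · exact (continuous_sigmaMax.comp (by fun_prop)).pow 2
  have h := le_integral_sq_div_sigmaMax_sq hm hnm2 B hBtB hBBt hT hδ v
  rw [← hmap, integral_map (aemeasurable_pi_lambda _ hz) hmeas.aestronglyMeasurable] at h
  rw [hτ]
  exact h
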